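/- arXiv:1607.00020 — 4 statements merged into one kernel-verified Lean document; each statement's English description precedes it below -/
import Mathlib

section
/- Let A be a commutative ring which is a ℚ-algebra and T : A → A a derivation. Define, for a ∈ A and j ∈ ℤ, the element a_{(j)}b := 0 if j ≥ 0 and a_{(j)}b := (1/(−j−1)!)·T^{−j−1}(a)·b if j < 0. Then the Borcherds identity holds: for all a, b, c ∈ A and all integers m, n, k, Σ_{j≥0} C(m,j)·( (a_{(n+j)}b)_{(m+k−j)} c ) = Σ_{j≥0} (−1)^j · C(n,j) · ( a_{(m+n−j)}(b_{(k+j)} c) − (−1)^n · b_{(n+k−j)}(a_{(m+j)} c) ), where both sums have only finitely many nonzero terms. -/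
open Finset in
/-- The generalized binomial coefficient `C(x,i) = x(x−1)⋯(x−i+1)/i!`. -/
noncomputable def genBinom (x : ℚ) (i : ℕ) : ℚ :=
  (∏ t ∈ Finset.range i, (x - t)) / (i.factorial : ℚ)

/-- The `j`-th product `a_{(j)} b` of the commutative vertex algebra attached to a
commutative ℚ-algebra `A` with derivation `T`: it is `0` for `j ≥ 0` and
`(1/(−j−1)!)·T^{−j−1}(a)·b` for `j < 0`. -/
noncomputable def nProd {A : Type*} [CommRing A] [Algebra ℚ A]
    (T : Derivation ℚ A A) (a : A) (j : ℤ) (b : A) : A :=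
  if 0 ≤ j then 0
  else (((-j - 1).toNat.factorial : ℚ))⁻¹ • ((⇑T)^[(-j - 1).toNat] a) * b

lemma genBinom_eq_choose (x : ℚ) (i : ℕ) : genBinom x i = Ring.choose x i := by
  unfold genBinom
  rw [Ring.choose_eq_smul, smul_eq_mul, div_eq_inv_mul]
  congr 1
  rw [← Polynomial.aeval_eq_smeval]
  induction i with
  | zero => simp
  | succ i ih => rw [Finset.prod_range_succ, ih, descPochhammer_succ_right]; simp

lemma genBinom_nat (p i : ℕ) : genBinom (p : ℚ) i = (p.choose i : ℚ) := by
  rw [genBinom_eq_choose, Ring.choose_natCast]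

lemma genBinom_neg_nat (p i : ℕ) :
    genBinom (-(p : ℚ) - 1) i = (-1) ^ i * ((p + i).choose i : ℚ) := by
  rw [genBinom_eq_choose, show -(p : ℚ) - 1 = -((p : ℚ) + 1) by ring, Ring.choose_neg,
    show (p : ℚ) + 1 + i - 1 = ((p + i : ℕ) : ℚ) by push_cast; ring, Ring.choose_natCast]
  rw [Units.smul_def, zsmul_eq_mul, Int.coe_negOnePow_natCast]
  simp

lemma genBinom_vandermonde (m : ℚ) (r N : ℕ) :
    genBinom (m + r) N
      = ∑ j ∈ Finset.range (N + 1), genBinom m j * (r.choose (N - j) : ℚ) := by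
  rw [genBinom_eq_choose, Ring.add_choose_eq N (Commute.all _ _),
    Finset.Nat.sum_antidiagonal_eq_sum_range_succ_mk]
  refine Finset.sum_congr rfl fun j _ => ?_
  rw [Ring.choose_natCast, genBinom_eq_choose]

lemma coeff_identity (M n : ℤ) :
    (if n < 0 then genBinom (M : ℚ) (-n - 1).toNat else 0)
      = (if 0 ≤ M + n + 1 then
          (-1 : ℚ) ^ (M + n + 1).toNat * genBinom (n : ℚ) (M + n + 1).toNat else 0)
        - (if 0 ≤ -M - 1 then
          (-1 : ℚ) ^ n * ((-1 : ℚ) ^ (-M - 1).toNat * genBinom (n : ℚ) (-M - 1).toNat) else 0) := by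
  rcases lt_or_ge n 0 with hn | hn
  · obtain ⟨N, rfl⟩ : ∃ N : ℕ, n = -(N : ℤ) - 1 := ⟨(-n - 1).toNat, by omega⟩
    rw [if_pos hn, show (-(-(N : ℤ) - 1) - 1).toNat = N by omega]
    have hz : (-1 : ℚ) ^ (-(N : ℤ) - 1) = -(-1) ^ N := by
      rw [zpow_sub₀ (by norm_num), zpow_neg, zpow_natCast]
      rcases neg_one_pow_eq_or ℚ N with h | h <;> rw [h] <;> norm_num
    have hs : ∀ i : ℕ, (-1 : ℚ) ^ i * (-1) ^ i = 1 := fun i => by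
      rw [← mul_pow]; norm_num
    rw [hz]
    push_cast
    simp only [genBinom_neg_nat, ← mul_assoc, hs]
    rcases lt_or_ge M 0 with hM | hM
    · obtain ⟨P, rfl⟩ : ∃ P : ℕ, M = -(P : ℤ) - 1 := ⟨(-M - 1).toNat, by omega⟩
      rw [if_neg (by omega), if_pos (by omega), show (-(-(P : ℤ) - 1) - 1).toNat = P by omega]
      push_cast
      rw [genBinom_neg_nat, add_comm N P,
        Nat.choose_symm_add]
      ring
    · obtain ⟨P, rfl⟩ : ∃ P : ℕ, M = (P : ℤ) := ⟨M.toNat, by omega⟩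
      rw [if_neg (show ¬ (0 : ℤ) ≤ -(P : ℤ) - 1 by omega)]
      push_cast
      rw [genBinom_nat]
      by_cases h : N ≤ P
      · obtain ⟨Q, rfl⟩ := Nat.exists_eq_add_of_le h
        rw [if_pos (by omega), show (((N + Q : ℕ) : ℤ) + (-(N : ℤ) - 1) + 1).toNat = Q by omega,
          Nat.choose_symm_add]
        ring
      · rw [if_neg (by omega), Nat.choose_eq_zero_of_lt (by omega)]
        simp
  · obtain ⟨N, rfl⟩ : ∃ N : ℕ, n = (N : ℤ) := ⟨n.toNat, by omega⟩
    rw [if_neg (by omega)]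
    push_cast
    simp only [genBinom_nat, zpow_natCast]
    rcases lt_or_ge M 0 with hM | hM
    · obtain ⟨P, rfl⟩ : ∃ P : ℕ, M = -(P : ℤ) - 1 := ⟨(-M - 1).toNat, by omega⟩
      rw [if_pos (show 0 ≤ (-(-(P : ℤ) - 1) - 1) by omega),
        show (-(-(P : ℤ) - 1) - 1).toNat = P by omega]
      by_cases h : P ≤ N
      · obtain ⟨Q, rfl⟩ := Nat.exists_eq_add_of_le h
        rw [if_pos (by omega), show (-(P : ℤ) - 1 + ((P + Q : ℕ) : ℤ) + 1).toNat = Q by omega,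
          Nat.choose_symm_add, pow_add]
        rcases neg_one_pow_eq_or ℚ P with h | h <;> rw [h] <;> ring
      · rw [if_neg (by omega), Nat.choose_eq_zero_of_lt (by omega)]
        simp
    · rw [if_neg (show ¬ (0 : ℤ) ≤ -M - 1 by omega), if_pos (by omega),
        Nat.choose_eq_zero_of_lt (by omega)]
      simp

/-- divided power of a derivation -/
noncomputable def divD {A : Type*} [CommRing A] [Algebra ℚ A]
    (T : Derivation ℚ A A) (i : ℕ) (a : A) : A :=
  ((i.factorial : ℚ))⁻¹ • ((⇑T)^[i] a)

section
variable {A : Type*} [CommRing A] [Algebra ℚ A] (T : Derivation ℚ A A)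

lemma iterate_leibniz (n : ℕ) (a b : A) :
    T^[n] (a * b) = ∑ ij ∈ Finset.HasAntidiagonal.antidiagonal n, n.choose ij.1 • (T^[ij.1] a * T^[ij.2] b) := by
  induction n with
  | zero => simp
  | succ n ih =>
    rw [Finset.sum_antidiagonal_choose_succ_nsmul (M := A) (fun i j => T^[i] a * T^[j] b) n,
      Function.iterate_succ_apply', ih, map_sum, ← Finset.sum_add_distrib]
    refine Finset.sum_congr rfl fun ij h => ?_
    rw [Finset.HasAntidiagonal.mem_antidiagonal] at h
    rw [Nat.choose_symm_of_eq_add h.symm, map_nsmul, Derivation.leibniz,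
      Function.iterate_succ_apply', Function.iterate_succ_apply', smul_add, smul_eq_mul,
      smul_eq_mul, mul_comm (T^[ij.2] b)]

lemma iterate_smul (i : ℕ) (q : ℚ) (a : A) : T^[i] (q • a) = q • T^[i] a := by
  induction i with
  | zero => simp
  | succ i ih => rw [Function.iterate_succ_apply', ih, Derivation.map_smul, Function.iterate_succ_apply']

lemma divD_mul (n : ℕ) (a b : A) :
    divD T n (a * b) = ∑ p ∈ Finset.range (n + 1), divD T p a * divD T (n - p) b := by
  unfold divD
  rw [iterate_leibniz, Finset.Nat.sum_antidiagonal_eq_sum_range_succ_mk, Finset.smul_sum]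
  refine Finset.sum_congr rfl fun p hp => ?_
  have hp : p ≤ n := by simpa [Nat.lt_succ_iff] using hp
  simp only
  rw [smul_mul_smul_comm, ← Nat.cast_smul_eq_nsmul ℚ, smul_smul]
  congr 1
  rw [Nat.cast_choose ℚ hp]
  have := Nat.factorial_ne_zero n
  field_simp

lemma divD_divD (p i : ℕ) (a : A) :
    divD T p (divD T i a) = ((p + i).choose i : ℚ) • divD T (p + i) a := by
  unfold divD
  rw [iterate_smul, smul_smul, smul_smul, ← Function.iterate_add_apply]
  congr 1
  rw [Nat.cast_choose ℚ (Nat.le_add_left i p), Nat.add_sub_cancel]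
  have := Nat.factorial_ne_zero (p + i)
  field_simp

lemma nProd_nonneg (a b : A) {j : ℤ} (h : 0 ≤ j) : nProd T a j b = 0 := if_pos h

lemma nProd_neg (a b : A) {j : ℤ} (i : ℕ) (h : j = -(i : ℤ) - 1) :
    nProd T a j b = divD T i a * b := by
  unfold nProd divD
  rw [if_neg (by omega), show (-j - 1).toNat = i by omega]

lemma nProd_zero_left (b : A) (j : ℤ) : nProd T 0 j b = 0 := by
  unfold nProd
  split_ifs
  · rfl
  · rw [iterate_map_zero]; simp

lemma nProd_zero_right (a : A) (j : ℤ) : nProd T a j 0 = 0 := by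
  unfold nProd; simp

/-- the iterated product expanded in the monomials `D_r a D_s b c`. -/
lemma lhs_term (a b c : A) (m n k : ℤ) (W : ℕ) (hW : (W : ℤ) = -m - n - k - 2) (j : ℕ) :
    nProd T (nProd T a (n + j) b) (m + k - j) c
      = ∑ r ∈ Finset.range (W + 1),
          (if 0 ≤ -n - 1 - j then (r.choose (-n - 1 - j).toNat : ℚ) else 0) •
            (divD T r a * divD T (W - r) b * c) := by
  by_cases h : 0 ≤ -n - 1 - j
  · obtain ⟨i, hi⟩ : ∃ i : ℕ, (i : ℤ) = -n - 1 - j := ⟨(-n - 1 - j).toNat, by omega⟩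
    simp only [if_pos h, show (-n - 1 - j).toNat = i by omega]
    rw [nProd_neg T a b i (by omega)]
    by_cases h2 : i ≤ W
    · obtain ⟨N, rfl⟩ := Nat.exists_eq_add_of_le h2
      rw [nProd_neg T _ c N (by push_cast at hW; omega), divD_mul, add_assoc,
        Finset.sum_range_add _ i (N + 1), Finset.sum_eq_zero (s := Finset.range i), zero_add,
        Finset.sum_mul]
      · refine Finset.sum_congr rfl fun p _ => ?_
        rw [divD_divD, Nat.add_comm p i, Nat.add_sub_add_left, smul_mul_assoc, smul_mul_assoc]
      · intro r hr
        rw [Nat.choose_eq_zero_of_lt (by simpa using hr)]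
        simp
    · rw [nProd_nonneg T _ _ (by omega), Finset.sum_eq_zero]
      intro r hr
      have := Finset.mem_range.1 hr
      rw [Nat.choose_eq_zero_of_lt (by omega)]
      simp
  · rw [nProd_nonneg T a b (by omega), nProd_zero_left]
    simp only [if_neg h, zero_smul, Finset.sum_const_zero]

lemma rhs_term1 (a b c : A) (m n k : ℤ) (W : ℕ) (hW : (W : ℤ) = -m - n - k - 2) (j : ℕ) :
    nProd T a (m + n - j) (nProd T b (k + j) c)
      = ∑ r ∈ Finset.range (W + 1),
          (if (j : ℤ) = m + r + n + 1 then (1 : ℚ) else 0) •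
            (divD T r a * divD T (W - r) b * c) := by
  by_cases h : 0 ≤ j - m - n - 1 ∧ 0 ≤ -k - j - 1
  · obtain ⟨r, hr⟩ : ∃ r : ℕ, (r : ℤ) = j - m - n - 1 := ⟨(j - m - n - 1).toNat, by omega⟩
    rw [nProd_neg T a _ r (by omega), nProd_neg T b _ (W - r) (by omega),
      Finset.sum_eq_single r, if_pos (by omega), one_smul, mul_assoc]
    · intro s _ hs
      rw [if_neg (by omega), zero_smul]
    · intro hh
      exact absurd (Finset.mem_range.2 (by omega)) hh
  · rw [Finset.sum_eq_zero]
    · by_cases h1 : 0 ≤ j - m - n - 1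
      · rw [nProd_nonneg T b c (by omega), nProd_zero_right]
      · rw [nProd_nonneg T a _ (by omega)]
    · intro r hr
      have := Finset.mem_range.1 hr
      rw [if_neg (by omega), zero_smul]

lemma rhs_term2 (a b c : A) (m n k : ℤ) (W : ℕ) (hW : (W : ℤ) = -m - n - k - 2) (j : ℕ) :
    nProd T b (n + k - j) (nProd T a (m + j) c)
      = ∑ r ∈ Finset.range (W + 1),
          (if (j : ℤ) = -(m + r) - 1 then (1 : ℚ) else 0) •
            (divD T r a * divD T (W - r) b * c) := by
  by_cases h : 0 ≤ j - n - k - 1 ∧ 0 ≤ -m - j - 1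
  · obtain ⟨r, hr⟩ : ∃ r : ℕ, (r : ℤ) = -m - j - 1 := ⟨(-m - j - 1).toNat, by omega⟩
    rw [nProd_neg T a _ r (by omega), nProd_neg T b _ (W - r) (by omega),
      Finset.sum_eq_single r, if_pos (by omega), one_smul]
    · ring
    · intro s _ hs
      rw [if_neg (by omega), zero_smul]
    · intro hh
      exact absurd (Finset.mem_range.2 (by omega)) hh
  · rw [Finset.sum_eq_zero]
    · by_cases h1 : 0 ≤ j - n - k - 1
      · rw [nProd_nonneg T a c (by omega), nProd_zero_right]
      · rw [nProd_nonneg T b _ (by omega)]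
    · intro r hr
      have := Finset.mem_range.1 hr
      rw [if_neg (by omega), zero_smul]

end

lemma sum_lhs_coeff (m n : ℤ) (r J : ℕ) (hJ : -n < J) :
    ∑ j ∈ Finset.range J, genBinom (m : ℚ) j *
        (if 0 ≤ -n - 1 - j then (r.choose (-n - 1 - j).toNat : ℚ) else 0)
      = if n < 0 then genBinom ((m + r : ℤ) : ℚ) (-n - 1).toNat else 0 := by
  split_ifs with hn
  · obtain ⟨N, rfl⟩ : ∃ N : ℕ, n = -(N : ℤ) - 1 := ⟨(-n - 1).toNat, by omega⟩
    rw [show (-(-(N : ℤ) - 1) - 1).toNat = N by omega]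
    push_cast
    rw [genBinom_vandermonde]
    symm
    have hsub : Finset.range (N + 1) ⊆ Finset.range J := Finset.range_subset_range.2 (by omega)
    rw [← Finset.sum_subset hsub]
    · refine Finset.sum_congr rfl fun j hj => ?_
      have := Finset.mem_range.1 hj
      rw [if_pos (by omega), show (-(-(N : ℤ) - 1) - 1 - j).toNat = N - j by omega]
    · intro j _ hj
      rw [Finset.mem_range] at hj
      rw [if_neg (by omega), mul_zero]
  · refine Finset.sum_eq_zero fun j _ => ?_
    rw [if_neg (by omega), mul_zero]

lemma sum_single_coeff (f : ℕ → ℚ) (J : ℕ) (z : ℤ) (hz : z < J) :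
    ∑ j ∈ Finset.range J, f j * (if (j : ℤ) = z then (1 : ℚ) else 0)
      = if 0 ≤ z then f z.toNat else 0 := by
  split_ifs with h
  · rw [Finset.sum_eq_single z.toNat, if_pos (by omega), mul_one]
    · intro j _ hj
      rw [if_neg (by omega), mul_zero]
    · intro hh
      exact absurd (Finset.mem_range.2 (by omega)) hh
  · refine Finset.sum_eq_zero fun j _ => ?_
    rw [if_neg (by omega), mul_zero]

/-- a commutative ℚ-algebra with a derivation, equipped with the
products `a_{(j)}b` above, satisfies the Borcherds identity; both sums have
finitely many nonzero terms. -/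
theorem commutative_vertex_algebra_borcherds_identity
    (A : Type*) [CommRing A] [Algebra ℚ A] (T : Derivation ℚ A A)
    (a b c : A) (m n k : ℤ) :
    (Set.Finite (Function.support fun j : ℕ =>
      genBinom (m : ℚ) j • nProd T (nProd T a (n + j) b) (m + k - j) c)) ∧
    (Set.Finite (Function.support fun j : ℕ =>
      ((-1 : ℚ) ^ j * genBinom (n : ℚ) j) •
        (nProd T a (m + n - j) (nProd T b (k + j) c)
          - (-1 : ℚ) ^ n • nProd T b (n + k - j) (nProd T a (m + j) c)))) ∧
    (∑ᶠ j : ℕ, genBinom (m : ℚ) j • nProd T (nProd T a (n + j) b) (m + k - j) c)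
      = ∑ᶠ j : ℕ, ((-1 : ℚ) ^ j * genBinom (n : ℚ) j) •
          (nProd T a (m + n - j) (nProd T b (k + j) c)
            - (-1 : ℚ) ^ n • nProd T b (n + k - j) (nProd T a (m + j) c)) := by
  obtain ⟨J, hJm, hJn, hJk⟩ : ∃ J : ℕ, -m < J ∧ -n < J ∧ -k < J :=
    ⟨(-m).toNat + (-n).toNat + (-k).toNat + 1, by omega, by omega, by omega⟩
  have hL : (Function.support fun j : ℕ =>
      genBinom (m : ℚ) j • nProd T (nProd T a (n + j) b) (m + k - j) c)
      ⊆ ↑(Finset.range J) := by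
    intro j hj
    by_contra hlt
    simp only [Finset.coe_range, Set.mem_Iio, not_lt] at hlt
    refine hj ?_
    simp only
    rw [nProd_nonneg T a b (by omega), nProd_zero_left, smul_zero]
  have hR : (Function.support fun j : ℕ =>
      ((-1 : ℚ) ^ j * genBinom (n : ℚ) j) •
        (nProd T a (m + n - j) (nProd T b (k + j) c)
          - (-1 : ℚ) ^ n • nProd T b (n + k - j) (nProd T a (m + j) c)))
      ⊆ ↑(Finset.range J) := by
    intro j hj
    by_contra hlt
    simp only [Finset.coe_range, Set.mem_Iio, not_lt] at hlt
    refine hj ?_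
    simp only
    rw [nProd_nonneg T b c (by omega), nProd_nonneg T a c (by omega), nProd_zero_right,
      nProd_zero_right, smul_zero, sub_zero, smul_zero]
  refine ⟨(Finset.finite_toSet _).subset hL, (Finset.finite_toSet _).subset hR, ?_⟩
  rw [finsum_eq_sum_of_support_subset _ hL, finsum_eq_sum_of_support_subset _ hR]
  by_cases hW0 : 0 ≤ -m - n - k - 2
  · obtain ⟨W, hW⟩ : ∃ W : ℕ, (W : ℤ) = -m - n - k - 2 := ⟨(-m - n - k - 2).toNat, by omega⟩
    simp only [lhs_term T a b c m n k W hW, rhs_term1 T a b c m n k W hW,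
      rhs_term2 T a b c m n k W hW, Finset.smul_sum, ← Finset.sum_sub_distrib, smul_smul,
      ← sub_smul]
    rw [Finset.sum_comm, Finset.sum_comm (s := Finset.range J)]
    refine Finset.sum_congr rfl fun r hr => ?_
    have hr := Finset.mem_range.1 hr
    rw [← Finset.sum_smul, ← Finset.sum_smul, sum_lhs_coeff m n r J hJn, coeff_identity]
    congr 1
    simp only [mul_sub, Finset.sum_sub_distrib]
    rw [sum_single_coeff (fun j => (-1 : ℚ) ^ j * genBinom (n : ℚ) j) J _ (by omega)]
    simp only [← mul_assoc]
    rw [sum_single_coeff (fun j => (-1 : ℚ) ^ j * genBinom (n : ℚ) j * (-1 : ℚ) ^ n) J _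
      (by omega)]
    congr 2
    ring
  · rw [Finset.sum_eq_zero, Finset.sum_eq_zero]
    · intro j _
      have h1 : nProd T a (m + n - j) (nProd T b (k + j) c) = 0 := by
        by_cases h : 0 ≤ k + j
        · rw [nProd_nonneg T b c h, nProd_zero_right]
        · rw [nProd_nonneg T a _ (by omega)]
      have h2 : nProd T b (n + k - j) (nProd T a (m + j) c) = 0 := by
        by_cases h : 0 ≤ m + j
        · rw [nProd_nonneg T a c h, nProd_zero_right]
        · rw [nProd_nonneg T b _ (by omega)]
      rw [h1, h2, smul_zero, sub_zero, smul_zero]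
    · intro j _
      by_cases h : 0 ≤ n + j
      · rw [nProd_nonneg T a b h, nProd_zero_left, smul_zero]
      · rw [nProd_nonneg T _ c (by omega), smul_zero]
end

section
/- With notation as in the context, for every p ∈ R_k and every e ∈ ℤ, the coefficient of s^e in Φ(T(p)) equals ((e+m)/m) times the coefficient of s^{e+m} in Φ(p). (Equivalently, Φ ∘ T = ∂_z ∘ Φ, where ∂_z is the formal derivative in z = s^m acting on Laurent series in s by ∂_z(s^e) = (e/m)·s^{e−m}.) -/
open MvPolynomial

/-- Index set for the coordinate ring `B_α = ℂ[J^g 𝔸^k]` of the twisted jet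
scheme: pairs `(i,e)` with `e ≡ α_i (mod m)`. -/
abbrev TwIdx (k m : ℕ) (α : Fin k → ℕ) : Type := {q : Fin k × ℕ // q.2 % m = α q.1}

theorem euler_mul {B : Type*} [CommRing B] [Algebra ℂ B] (c : ℂ) (f f' h h' : LaurentSeries B)
    (hf : ∀ e : ℤ, h.coeff e = ((e : ℂ) / c) • f.coeff e)
    (hf' : ∀ e : ℤ, h'.coeff e = ((e : ℂ) / c) • f'.coeff e) (e : ℤ) :
    (f * h' + h * f').coeff e = ((e : ℂ) / c) • (f * f').coeff e := by
  have s1 : h.support ⊆ f.support := by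
    intro x hx hx'
    apply hx
    rw [hf, hx', smul_zero]
  have s2 : h'.support ⊆ f'.support := by
    intro x hx hx'
    apply hx
    rw [hf', hx', smul_zero]
  rw [HahnSeries.coeff_add, HahnSeries.coeff_mul_left' f.isPWO_support s1,
    HahnSeries.coeff_mul_right' f'.isPWO_support s2, HahnSeries.coeff_mul,
    ← Finset.sum_add_distrib, Finset.smul_sum]
  refine Finset.sum_congr rfl fun ij hij => ?_
  have h3 : ij.1 + ij.2 = e := (Finset.mem_antidiagonal.mp hij).2.2
  rw [hf, hf', ← h3, mul_smul_comm, smul_mul_assoc, ← add_smul]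
  congr 1
  push_cast
  ring

theorem deriv_mul_aux {B : Type*} [CommRing B] [Algebra ℂ B] (m : ℕ) (f f' g g' : LaurentSeries B)
    (hf : ∀ e : ℤ, g.coeff e = (((e : ℂ) + m) / m) • f.coeff (e + m))
    (hf' : ∀ e : ℤ, g'.coeff e = (((e : ℂ) + m) / m) • f'.coeff (e + m)) (e : ℤ) :
    (f * g' + f' * g).coeff e = (((e : ℂ) + m) / m) • (f * f').coeff (e + m) := by
  have key : ∀ (u : LaurentSeries B) (a : ℤ),
      (HahnSeries.single (m : ℤ) (1 : B) * u).coeff (a + m) = u.coeff a := by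
    intro u a
    rw [HahnSeries.coeff_single_mul_add, one_mul]
  have key2 : ∀ u v : LaurentSeries B,
      (∀ e : ℤ, v.coeff e = (((e : ℂ) + m) / m) • u.coeff (e + m)) →
      ∀ e : ℤ, (HahnSeries.single (m : ℤ) (1 : B) * v).coeff e = ((e : ℂ) / m) • u.coeff e := by
    intro u v huv e
    have := key v (e - m)
    rw [sub_add_cancel] at this
    rw [this, huv, sub_add_cancel]
    push_cast
    rw [sub_add_cancel]
  have := euler_mul (m : ℂ) f f' _ _ (key2 f g hf) (key2 f' g' hf') (e + m)
  rw [← key (f * g' + f' * g) e]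
  push_cast at this
  rw [← this]
  congr 1
  ring

/-- the twisted fields intertwine the translation operator `T` with
the formal derivative `∂_z` in `z = s^m`: for every `p ∈ R_k` and `e ∈ ℤ`, the
coefficient of `s^e` in `Φ(T(p))` equals `((e+m)/m)` times the coefficient of
`s^{e+m}` in `Φ(p)`. -/
theorem twisted_field_translation
    (k m : ℕ) (hk : 1 ≤ k) (hm : 1 ≤ m)
    (α : Fin k → ℕ) (hα : ∀ i, α i < m)
    (T : Derivation ℂ (MvPolynomial (Fin k × ℕ) ℂ) (MvPolynomial (Fin k × ℕ) ℂ))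
    (hT : ∀ (i : Fin k) (ℓ : ℕ),
      T (X (i, ℓ)) = ((ℓ : ℂ) + 1) • X (i, ℓ + 1))
    (Φ : MvPolynomial (Fin k × ℕ) ℂ →ₐ[ℂ] LaurentSeries (MvPolynomial (TwIdx k m α) ℂ))
    (hΦ : ∀ (i : Fin k) (ℓ : ℕ) (e : ℤ),
      (Φ (X (i, ℓ))).coeff e =
        if h : 0 ≤ e + ℓ * m ∧ (e + ℓ * m).toNat % m = α i then
          (((ℓ.factorial : ℂ))⁻¹ *
            ∏ j ∈ Finset.range ℓ, (((e : ℂ) + (j + 1) * m) / m)) •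
            X (⟨(i, (e + ℓ * m).toNat), h.2⟩ : TwIdx k m α)
        else 0) :
    ∀ (p : MvPolynomial (Fin k × ℕ) ℂ) (e : ℤ),
      (Φ (T p)).coeff e = (((e : ℂ) + m) / m) • (Φ p).coeff (e + m) := by
  have hC : ∀ a : ℂ, Φ (C a) = HahnSeries.C (algebraMap ℂ (MvPolynomial (TwIdx k m α) ℂ) a) := by
    intro a
    refine (Φ.commutes a).trans ?_
    rw [HahnSeries.algebraMap_apply']
    rw [PowerSeries.algebraMap_apply]
    exact HahnSeries.ofPowerSeries_C _
  intro p
  induction p using MvPolynomial.induction_on with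
  | C a =>
    intro e
    have h1 : T (C a) = 0 := T.map_algebraMap a
    rw [h1, hC, map_zero, HahnSeries.C_apply, HahnSeries.coeff_single]
    split_ifs with h
    · have : (e : ℂ) + m = 0 := by exact_mod_cast h
      simp [this]
    · simp
  | add p q hp hq =>
    intro e
    simp only [map_add, HahnSeries.coeff_add, hp, hq, smul_add]
  | mul_X p n hp =>
    obtain ⟨i, l⟩ := n
    have hX : ∀ e : ℤ, (Φ (T (X (i, l)))).coeff e
        = (((e : ℂ) + m) / m) • (Φ (X (i, l))).coeff (e + m) := by
      intro e
      have hE : e + ((l + 1 : ℕ) : ℤ) * m = e + m + l * m := by push_cast; ring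
      rw [hT, MvPolynomial.smul_eq_C_mul, map_mul, hC, HahnSeries.C_mul_eq_smul,
        HahnSeries.coeff_smul, algebraMap_smul, hΦ, hΦ]
      simp only [hE]
      split_ifs with h
      · rw [smul_smul, smul_smul]
        congr 1
        rw [Finset.prod_range_succ', Nat.factorial_succ]
        have h1 : ((l : ℂ) + 1) ≠ 0 := by exact_mod_cast Nat.succ_ne_zero l
        have h2 : ∀ j : ℕ, ((e : ℂ) + (((j + 1 : ℕ) : ℂ) + 1) * m) / m
            = (((e + m : ℤ) : ℂ) + ((j : ℂ) + 1) * m) / m := by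
          intro j; push_cast; ring
        simp only [h2]
        generalize ∏ j ∈ Finset.range l, (((e + m : ℤ) : ℂ) + ((j : ℂ) + 1) * m) / m = P
        push_cast
        rw [mul_inv]
        field_simp
        ring
      · simp
    intro e
    rw [T.leibniz, map_add, smul_eq_mul, smul_eq_mul, map_mul, map_mul, map_mul]
    exact deriv_mul_aux m _ _ _ _ hp hX e
end

section
/- With notation as in the context, for every p ∈ I_∞ and every e ∈ ℤ, the coefficient of s^e in Φ(p) lies in the ideal J ⊆ B_α. Consequently Φ descends to a ℂ-algebra homomorphism A_∞ = R_k/I_∞ → (B_α/J)((s)), i.e. the twisted fields are well defined on the quotients ℂ[JZ] and ℂ[J^g Z]. -/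
/-- Euler derivation `s d/ds` on Laurent series. -/
noncomputable def eulerL {B : Type} [CommRing B] (f : LaurentSeries B) : LaurentSeries B where
  coeff e := (e : B) * f.coeff e
  isPWO_support' := f.isPWO_support.mono (by
    intro e he h
    exact he (by simp [h]))

lemma eulerL_coeff {B : Type} [CommRing B] (f : LaurentSeries B) (e : ℤ) :
    (eulerL f).coeff e = (e : B) * f.coeff e := rfl

lemma eulerL_support {B : Type} [CommRing B] (f : LaurentSeries B) :
    (eulerL f).support ⊆ f.support := by
  intro e he h
  exact he (by simp [eulerL_coeff, h])

lemma eulerL_add {B : Type} [CommRing B] (f g : LaurentSeries B) :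
    eulerL (f + g) = eulerL f + eulerL g := by
  ext e
  simp [eulerL_coeff, mul_add]

lemma eulerL_mul {B : Type} [CommRing B] (f g : LaurentSeries B) :
    eulerL (f * g) = eulerL f * g + f * eulerL g := by
  ext e
  rw [HahnSeries.coeff_add, eulerL_coeff,
    HahnSeries.coeff_mul_left' f.isPWO_support (eulerL_support f),
    HahnSeries.coeff_mul_right' g.isPWO_support (eulerL_support g), HahnSeries.coeff_mul,
    Finset.mul_sum, ← Finset.sum_add_distrib]
  refine Finset.sum_congr rfl fun ij hij => ?_
  have h : ij.1 + ij.2 = e := (Finset.mem_antidiagonal.mp hij).2.2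
  rw [← h, eulerL_coeff, eulerL_coeff]
  push_cast
  ring

/-- The derivation `(1/m) s^{1-m} d/ds` on Laurent series. -/
noncomputable def derL {B : Type} [CommRing B] [Algebra ℂ B] (m : ℕ) (f : LaurentSeries B) :
    LaurentSeries B :=
  HahnSeries.single (-(m : ℤ)) (algebraMap ℂ B (m : ℂ)⁻¹) * eulerL f

lemma derL_coeff {B : Type} [CommRing B] [Algebra ℂ B] (m : ℕ) (f : LaurentSeries B) (e : ℤ) :
    (derL m f).coeff e = (((e : ℂ) + m) / m) • f.coeff (e + m) := by
  rw [derL, HahnSeries.coeff_single_mul, eulerL_coeff, sub_neg_eq_add, Algebra.smul_def,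
    div_eq_mul_inv, map_mul]
  push_cast
  simp only [map_add, map_intCast, map_natCast]
  ring

lemma derL_add {B : Type} [CommRing B] [Algebra ℂ B] (m : ℕ) (f g : LaurentSeries B) :
    derL m (f + g) = derL m f + derL m g := by
  simp only [derL, eulerL_add, mul_add]

lemma derL_mul {B : Type} [CommRing B] [Algebra ℂ B] (m : ℕ) (f g : LaurentSeries B) :
    derL m (f * g) = derL m f * g + f * derL m g := by
  simp only [derL, eulerL_mul]
  ring

lemma algebraMapL_coeff {B : Type} [CommRing B] [Algebra ℂ B] (a : ℂ) (e : ℤ) :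
    (algebraMap ℂ (LaurentSeries B) a).coeff e = if e = 0 then algebraMap ℂ B a else 0 := by
  have h : algebraMap ℂ (LaurentSeries B) a = HahnSeries.single 0 (algebraMap ℂ B a) := by
    rw [HahnSeries.algebraMap_apply', PowerSeries.algebraMap_apply, HahnSeries.ofPowerSeries_C]
    rfl
  rw [h, HahnSeries.coeff_single]
  split_ifs <;> rfl

lemma derL_algebraMap {B : Type} [CommRing B] [Algebra ℂ B] (m : ℕ) (a : ℂ) :
    derL m (algebraMap ℂ (LaurentSeries B) a) = 0 := by
  have : eulerL (algebraMap ℂ (LaurentSeries B) a) = 0 := by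
    ext e
    rw [eulerL_coeff, algebraMapL_coeff]
    by_cases h : e = 0 <;> simp [h]
  rw [derL, this, mul_zero]

/-- Coefficientwise reduction modulo an ideal. -/
noncomputable def redL {B : Type} [CommRing B] [Algebra ℂ B] (J : Ideal B) :
    LaurentSeries B →ₐ[ℂ] LaurentSeries (B ⧸ J) where
  toFun f := HahnSeries.map f (Ideal.Quotient.mk J)
  map_one' := by
    ext e
    simp only [HahnSeries.map_coeff, HahnSeries.coeff_one]
    split_ifs <;> simp
  map_zero' := by ext e; simp
  map_add' f g := by ext e; simp
  map_mul' f g := HahnSeries.map_mul (Ideal.Quotient.mk J : B →ₙ+* B ⧸ J)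
  commutes' a := by
    ext e
    simp only [HahnSeries.map_coeff, algebraMapL_coeff]
    split_ifs
    · rfl
    · simp

lemma redL_coeff {B : Type} [CommRing B] [Algebra ℂ B] (J : Ideal B) (f : LaurentSeries B)
    (e : ℤ) : (redL J f).coeff e = Ideal.Quotient.mk J (f.coeff e) := rfl

lemma redL_eq_zero {B : Type} [CommRing B] [Algebra ℂ B] (J : Ideal B) (f : LaurentSeries B) :
    redL J f = 0 ↔ ∀ e, f.coeff e ∈ J := by
  constructor
  · intro h e
    rw [← Ideal.Quotient.eq_zero_iff_mem, ← redL_coeff, h, HahnSeries.coeff_zero]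
  · intro h
    ext e
    rw [redL_coeff, HahnSeries.coeff_zero, Ideal.Quotient.eq_zero_iff_mem]
    exact h e


open MvPolynomial

/-- for every `p ∈ I_∞` and every `e ∈ ℤ`, the coefficient of `s^e`
in `Φ(p)` lies in the ideal `J ⊆ B_α`; consequently `Φ` descends to a ℂ-algebra
homomorphism `A_∞ = R_k/I_∞ → (B_α/J)((s))`, i.e. the twisted fields are well
defined on the quotients `ℂ[JZ]` and `ℂ[J^g Z]`. -/
theorem twisted_field_descends_to_quotients
    (k r m : ℕ) (hk : 1 ≤ k) (hm : 1 ≤ m)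
    (α : Fin k → ℕ) (hα : ∀ i, α i < m)
    (T : Derivation ℂ (MvPolynomial (Fin k × ℕ) ℂ) (MvPolynomial (Fin k × ℕ) ℂ))
    (hT : ∀ (i : Fin k) (ℓ : ℕ),
      T (X (i, ℓ)) = ((ℓ : ℂ) + 1) • X (i, ℓ + 1))
    (ι : MvPolynomial (Fin k) ℂ →ₐ[ℂ] MvPolynomial (Fin k × ℕ) ℂ)
    (hι : ∀ i : Fin k, ι (X i) = X (i, 0))
    (P : Fin r → MvPolynomial (Fin k) ℂ)
    (Iinf : Ideal (MvPolynomial (Fin k × ℕ) ℂ))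
    (hIinf : Iinf = Ideal.span {q | ∃ (j : Fin r) (n : ℕ), q = (⇑T)^[n] (ι (P j))})
    (Φ : MvPolynomial (Fin k × ℕ) ℂ →ₐ[ℂ] LaurentSeries (MvPolynomial (TwIdx k m α) ℂ))
    (hΦ : ∀ (i : Fin k) (ℓ : ℕ) (e : ℤ),
      (Φ (X (i, ℓ))).coeff e =
        if h : 0 ≤ e + ℓ * m ∧ (e + ℓ * m).toNat % m = α i then
          (((ℓ.factorial : ℂ))⁻¹ *
            ∏ j ∈ Finset.range ℓ, (((e : ℂ) + (j + 1) * m) / m)) •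
            X (⟨(i, (e + ℓ * m).toNat), h.2⟩ : TwIdx k m α)
        else 0)
    (J : Ideal (MvPolynomial (TwIdx k m α) ℂ))
    (hJ : J = Ideal.span {c | ∃ (j : Fin r) (e : ℤ), c = (Φ (ι (P j))).coeff e}) :
    (∀ p ∈ Iinf, ∀ e : ℤ, (Φ p).coeff e ∈ J) ∧
    (∃ Φbar : (MvPolynomial (Fin k × ℕ) ℂ ⧸ Iinf) →ₐ[ℂ]
        LaurentSeries (MvPolynomial (TwIdx k m α) ℂ ⧸ J),
      ∀ (p : MvPolynomial (Fin k × ℕ) ℂ) (e : ℤ),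
        (Φbar (Ideal.Quotient.mk Iinf p)).coeff e
          = Ideal.Quotient.mk J ((Φ p).coeff e)) := by
  have hm0 : (m : ℂ) ≠ 0 := by exact_mod_cast (by omega : m ≠ 0)
  have hX : ∀ i ℓ, Φ (T (X (i, ℓ))) = derL m (Φ (X (i, ℓ))) := by
    intro i ℓ
    have hx : ((ℓ : ℂ) + 1) • (X (i, ℓ + 1) : MvPolynomial (Fin k × ℕ) ℂ)
        = algebraMap ℂ _ ((ℓ : ℂ) + 1) * X (i, ℓ + 1) := Algebra.smul_def _ _
    have hl : algebraMap ℂ (LaurentSeries (MvPolynomial (TwIdx k m α) ℂ)) ((ℓ : ℂ) + 1)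
        = HahnSeries.single 0 (algebraMap ℂ _ ((ℓ : ℂ) + 1)) := by
      ext1
      funext e
      rw [algebraMapL_coeff, HahnSeries.coeff_single]
      split_ifs <;> rfl
    have he' : ∀ e : ℤ, e + ((ℓ + 1 : ℕ) : ℤ) * m = e + m + ℓ * m := by
      intro e; push_cast; ring
    ext1
    funext e
    rw [derL_coeff, hT, hx, map_mul, AlgHom.commutes, hl, HahnSeries.coeff_single_zero_mul,
      ← Algebra.smul_def, hΦ, hΦ]
    simp only [he']
    split_ifs with h
    · rw [smul_smul, smul_smul]
      congr 1
      rw [Finset.prod_range_succ', Nat.factorial_succ]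
      have h1 : ((ℓ : ℂ) + 1) ≠ 0 := by exact_mod_cast Nat.succ_ne_zero ℓ
      have h2 : (ℓ.factorial : ℂ) ≠ 0 := by exact_mod_cast Nat.factorial_ne_zero ℓ
      have h3 : ∀ j ∈ Finset.range ℓ, ((e : ℂ) + (((j + 1 : ℕ) : ℂ) + 1) * m) / m
          = (((e + m : ℤ) : ℂ) + (j + 1) * m) / m := by
        intro j _; push_cast; ring
      rw [Finset.prod_congr rfl h3]
      push_cast
      field_simp
      ring
    · simp
  have hD : ∀ p, Φ (T p) = derL m (Φ p) := by
    intro p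
    induction p using MvPolynomial.induction_on with
    | C a =>
      have : (C a : MvPolynomial (Fin k × ℕ) ℂ) = algebraMap ℂ _ a := rfl
      rw [this, Derivation.map_algebraMap, AlgHom.commutes, derL_algebraMap, map_zero]
    | add p q hp hq => rw [map_add, map_add, map_add, derL_add, hp, hq]
    | mul_X p n hp =>
      obtain ⟨i, ℓ⟩ := n
      rw [Derivation.leibniz, map_add, smul_eq_mul, smul_eq_mul, map_mul, map_mul, map_mul,
        derL_mul, hp, hX]
      ring
  have hgen : ∀ (j : Fin r) (n : ℕ) (e : ℤ), (Φ ((⇑T)^[n] (ι (P j)))).coeff e ∈ J := by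
    intro j n
    induction n with
    | zero =>
      intro e
      rw [hJ]
      exact Ideal.subset_span ⟨j, e, rfl⟩
    | succ n ih =>
      intro e
      rw [Function.iterate_succ_apply', hD, derL_coeff, Algebra.smul_def]
      exact J.mul_mem_left _ (ih _)
  have hle : Iinf ≤ RingHom.ker ((redL J).comp Φ) := by
    rw [hIinf, Ideal.span_le]
    rintro q ⟨j, n, rfl⟩
    exact (redL_eq_zero J _).2 (hgen j n)
  refine ⟨fun p hp => (redL_eq_zero J _).1 (hle hp),
    Ideal.Quotient.liftₐ Iinf ((redL J).comp Φ) (fun a ha => hle ha), fun p e => rfl⟩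
end

section
/- With notation as in the context, for each p ∈ ℕ let L_p be the unique ℂ-linear derivation of R_k with L_p(x_{i,ℓ}) = (ℓ−p)·x_{i,ℓ−p} if ℓ ≥ p and L_p(x_{i,ℓ}) = 0 if ℓ < p. Then L_p(I_∞) ⊆ I_∞ for every p ∈ ℕ; consequently each L_p induces a derivation of A_∞ = ℂ[JZ] (the infinitesimal action of the group Aut 𝒪 of formal coordinate changes on the jet scheme JZ). -/
open MvPolynomial

/-- each derivation `L_p` (with `L_p(x_{i,ℓ}) = (ℓ−p)·x_{i,ℓ−p}`
for `ℓ ≥ p`, and `0` otherwise) preserves the jet ideal: `L_p(I_∞) ⊆ I_∞`;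
consequently each `L_p` induces a derivation of `A_∞ = ℂ[JZ]` (the
infinitesimal action of `Aut 𝒪` on the jet scheme). -/
theorem witt_action_preserves_jet_ideal
    (k r : ℕ) (hk : 1 ≤ k)
    (T : Derivation ℂ (MvPolynomial (Fin k × ℕ) ℂ) (MvPolynomial (Fin k × ℕ) ℂ))
    (hT : ∀ (i : Fin k) (ℓ : ℕ),
      T (X (i, ℓ)) = ((ℓ : ℂ) + 1) • X (i, ℓ + 1))
    (ι : MvPolynomial (Fin k) ℂ →ₐ[ℂ] MvPolynomial (Fin k × ℕ) ℂ)
    (hι : ∀ i : Fin k, ι (X i) = X (i, 0))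
    (P : Fin r → MvPolynomial (Fin k) ℂ)
    (Iinf : Ideal (MvPolynomial (Fin k × ℕ) ℂ))
    (hIinf : Iinf = Ideal.span {q | ∃ (j : Fin r) (n : ℕ), q = (⇑T)^[n] (ι (P j))})
    (L : ℕ → Derivation ℂ (MvPolynomial (Fin k × ℕ) ℂ) (MvPolynomial (Fin k × ℕ) ℂ))
    (hL : ∀ (p : ℕ) (i : Fin k) (ℓ : ℕ),
      L p (X (i, ℓ)) =
        if p ≤ ℓ then (((ℓ - p : ℕ)) : ℂ) • X (i, ℓ - p) else 0) :
    (∀ p : ℕ, ∀ q ∈ Iinf, L p q ∈ Iinf) ∧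
    (∀ p : ℕ, ∃ D : Derivation ℂ (MvPolynomial (Fin k × ℕ) ℂ ⧸ Iinf)
        (MvPolynomial (Fin k × ℕ) ℂ ⧸ Iinf),
      ∀ q : MvPolynomial (Fin k × ℕ) ℂ,
        D (Ideal.Quotient.mk Iinf q) = Ideal.Quotient.mk Iinf (L p q)) := by
  have key : ∀ (D : Derivation ℂ (MvPolynomial (Fin k × ℕ) ℂ) (MvPolynomial (Fin k × ℕ) ℂ)),
      (∀ (j : Fin r) (n : ℕ), D ((⇑T)^[n] (ι (P j))) ∈ Iinf) → ∀ q ∈ Iinf, D q ∈ Iinf := by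
    intro D hD q hq
    have hq2 := hq
    rw [hIinf] at hq2
    refine Submodule.span_induction (p := fun q _ => D q ∈ Iinf) ?_ ?_ ?_ ?_ hq2
    · rintro x ⟨j, n, rfl⟩
      exact hD j n
    · simp
    · intro x y _ _ hx hy
      rw [map_add]
      exact Iinf.add_mem hx hy
    · intro a x hxs hx
      rw [smul_eq_mul, Derivation.leibniz, smul_eq_mul, smul_eq_mul]
      replace hxs : x ∈ Iinf := by rw [hIinf]; exact hxs
      exact Iinf.add_mem (Iinf.mul_mem_left _ hx) (Iinf.mul_mem_right _ hxs)
  have hgen : ∀ (j : Fin r) (n : ℕ), (⇑T)^[n] (ι (P j)) ∈ Iinf := by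
    intro j n
    rw [hIinf]
    exact Ideal.subset_span ⟨j, n, rfl⟩
  have hTI : ∀ q ∈ Iinf, T q ∈ Iinf := by
    apply key
    intro j n
    rw [← Function.iterate_succ_apply' (⇑T)]
    exact hgen j (n + 1)
  have c0 : ⁅L 0, T⁆ = T := by
    apply MvPolynomial.derivation_ext
    rintro ⟨i, l⟩
    rw [Derivation.commutator_apply]
    simp only [hT, hL, Derivation.map_smul, Nat.zero_le, if_true, Nat.sub_zero, smul_smul]
    rw [← sub_smul]
    congr 1
    push_cast
    ring
  have cs : ∀ p, ⁅L (p + 1), T⁆ = ((p : ℂ) + 2) • L p := by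
    intro p
    apply MvPolynomial.derivation_ext
    rintro ⟨i, l⟩
    rw [Derivation.commutator_apply, Derivation.smul_apply]
    simp only [hT, hL, Derivation.map_smul]
    rcases lt_trichotomy l p with h | h | h
    · simp [show ¬ (p + 1 ≤ l + 1) by omega, show ¬ (p + 1 ≤ l) by omega,
        show ¬ (p ≤ l) by omega]
    · subst h
      simp
    · obtain ⟨m, rfl⟩ := Nat.exists_eq_add_of_lt h
      have e1 : p + m + 1 + 1 - (p + 1) = m + 1 := by omega
      have e2 : p + m + 1 - (p + 1) = m := by omega
      have e3 : p + m + 1 - p = m + 1 := by omega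
      rw [if_pos (by omega), if_pos (by omega), if_pos (by omega), e1, e2, e3]
      simp only [hT, Derivation.map_smul, smul_smul]
      rw [← sub_smul]
      congr 1
      push_cast
      ring
  have hzero : ∀ (p : ℕ) (f : MvPolynomial (Fin k) ℂ), L p (ι f) = 0 := by
    intro p f
    induction f using MvPolynomial.induction_on with
    | C a =>
      have : ι (C a) = algebraMap ℂ _ a := by
        rw [← MvPolynomial.algebraMap_eq]
        exact ι.commutes a
      rw [this, Derivation.map_algebraMap]
    | add f g hf hg => rw [map_add, map_add, hf, hg, add_zero]
    | mul_X f i hf =>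
      rw [map_mul, Derivation.leibniz, hf, hι, hL]
      split_ifs with h
      · simp
      · simp
  have hLg : ∀ (n p : ℕ) (j : Fin r), L p ((⇑T)^[n] (ι (P j))) ∈ Iinf := by
    intro n
    induction n with
    | zero =>
      intro p j
      simp [hzero]
    | succ n ih =>
      intro p j
      rw [Function.iterate_succ_apply']
      set g := (⇑T)^[n] (ι (P j)) with hg
      have e : L p (T g) = T (L p g) + ⁅L p, T⁆ g := by
        rw [Derivation.commutator_apply]
        ring
      rw [e]
      refine Iinf.add_mem (hTI _ (ih p j)) ?_
      cases p with
      | zero =>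
        rw [c0]
        exact hTI _ (hgen j n)
      | succ p =>
        rw [cs, Derivation.smul_apply, MvPolynomial.smul_eq_C_mul]
        exact Iinf.mul_mem_left _ (ih p j)
  have hmain : ∀ p : ℕ, ∀ q ∈ Iinf, L p q ∈ Iinf := fun p => key (L p) fun j n => hLg n p j
  refine ⟨hmain, fun p => ?_⟩
  let φ : (MvPolynomial (Fin k × ℕ) ℂ ⧸ Iinf) →ₗ[ℂ] (MvPolynomial (Fin k × ℕ) ℂ ⧸ Iinf) :=
    Submodule.mapQ (Iinf.restrictScalars ℂ) (Iinf.restrictScalars ℂ)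
      (L p : MvPolynomial (Fin k × ℕ) ℂ →ₗ[ℂ] MvPolynomial (Fin k × ℕ) ℂ)
      (fun q hq => hmain p q hq)
  have hφ : ∀ q, φ (Ideal.Quotient.mk Iinf q) = Ideal.Quotient.mk Iinf (L p q) := fun q => rfl
  refine ⟨Derivation.mk' φ ?_, hφ⟩
  intro a b
  obtain ⟨a, rfl⟩ := Ideal.Quotient.mk_surjective a
  obtain ⟨b, rfl⟩ := Ideal.Quotient.mk_surjective b
  rw [← map_mul, hφ, hφ, hφ, Derivation.leibniz]
  simp only [smul_eq_mul, map_add, map_mul]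
end
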